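/- Let ρ be a full-rank density operator on H = H_1 ⊗ … ⊗ H_n and N = {N_j} a neighborhood structure. If span(ρ) = ∩_j [F_{ρ_{N_j}}(Σ_{N_j}(ρ)) ⊗ B(H_{N̄_j})], then ρ is FFQLS relative to N; moreover, a stabilizing QL FF generator can be chosen whose neighborhood components are purely dissipative (zero Hamiltonian in some Lindblad representation). -/

import Mathlib

namespace QDS

open Matrix
open scoped ComplexOrder

/-! ### Basic single-system notions -/

section Single

variable {ι : Type*} [Fintype ι] [DecidableEq ι]

open Classical in
/-- The (unique) positive-semidefinite square root of a positive-semidefinite matrix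
(junk value `0` if no positive-semidefinite square root exists). -/
noncomputable def msqrt (A : Matrix ι ι ℂ) : Matrix ι ι ℂ :=
  if h : ∃ B : Matrix ι ι ℂ, B.PosSemidef ∧ B * B = A then h.choose else 0

open Classical in
/-- The Moore–Penrose pseudoinverse of a matrix, defined via its characterizing
properties (it always exists and is unique for complex matrices). -/
noncomputable def mpinv (A : Matrix ι ι ℂ) : Matrix ι ι ℂ :=
  if h : ∃ B : Matrix ι ι ℂ,
      A * B * A = A ∧ B * A * B = B ∧ (A * B)ᴴ = A * B ∧ (B * A)ᴴ = B * A
  then h.choose else 0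

/-- A density operator: positive semidefinite with unit trace. -/
def IsDensity (ρ : Matrix ι ι ℂ) : Prop := ρ.PosSemidef ∧ ρ.trace = 1

/-- A CPTP map in Kraus (operator-sum) form. -/
def IsCPTP (T : Matrix ι ι ℂ →ₗ[ℂ] Matrix ι ι ℂ) : Prop :=
  ∃ (m : ℕ) (M : Fin m → Matrix ι ι ℂ),
    (∀ X, T X = ∑ k, M k * X * (M k)ᴴ) ∧ (∑ k, (M k)ᴴ * M k) = 1

/-- The Lindblad (QDS) generator with Hamiltonian `Hm` and noise operators `Lk`:
`L(X) = -i[Hm, X] + Σₖ (Lₖ X Lₖ† - ½{Lₖ†Lₖ, X})`. -/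
noncomputable def lindbladMap (Hm : Matrix ι ι ℂ) {m : ℕ} (Lk : Fin m → Matrix ι ι ℂ) :
    Matrix ι ι ℂ →ₗ[ℂ] Matrix ι ι ℂ :=
  (-Complex.I) • (LinearMap.mulLeft ℂ Hm - LinearMap.mulRight ℂ Hm) +
    ∑ k, ((LinearMap.mulRight ℂ (Lk k)ᴴ).comp (LinearMap.mulLeft ℂ (Lk k)) -
      ((1 : ℂ)/2) • (LinearMap.mulLeft ℂ ((Lk k)ᴴ * Lk k) +
        LinearMap.mulRight ℂ ((Lk k)ᴴ * Lk k)))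

/-- `L` is a QDS (Lindblad) generator. -/
def IsLindblad (L : Matrix ι ι ℂ →ₗ[ℂ] Matrix ι ι ℂ) : Prop :=
  ∃ Hm : Matrix ι ι ℂ, Hm.IsHermitian ∧
    ∃ (m : ℕ) (Lk : Fin m → Matrix ι ι ℂ), L = lindbladMap Hm Lk

/-- `Ld` is the Hilbert–Schmidt adjoint of `L` (w.r.t. `⟨X,Y⟩ = Tr(X†Y)`). -/
def IsHSAdjoint (L Ld : Matrix ι ι ℂ →ₗ[ℂ] Matrix ι ι ℂ) : Prop :=
  ∀ X Y : Matrix ι ι ℂ, ((Ld X)ᴴ * Y).trace = (Xᴴ * L Y).trace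

/-- The fixed-point set of a (super)operator. -/
def fixSet (T : Matrix ι ι ℂ →ₗ[ℂ] Matrix ι ι ℂ) : Set (Matrix ι ι ℂ) := {X | T X = X}

/-- The support of an operator: the orthogonal complement of its kernel,
equivalently the range of its adjoint. -/
noncomputable def msupp (A : Matrix ι ι ℂ) : Submodule ℂ (ι → ℂ) := LinearMap.range (Aᴴ).mulVecLin

/-- The support of a set of operators: the span of the union of their supports. -/
noncomputable def suppSet (W : Set (Matrix ι ι ℂ)) : Submodule ℂ (ι → ℂ) := ⨆ O ∈ W, msupp O

/-- The minimal modular-invariant distorted algebra generated by `W` relative to `ρ`: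
the smallest subspace containing `W` that is closed under the adjoint, under the
`ρ`-modified product `(X,Y) ↦ X ρ⁻ Y`, and under the modular map `X ↦ ρ^{1/2} X ρ⁻^{1/2}`. -/
noncomputable def Fdist (ρ : Matrix ι ι ℂ) (W : Set (Matrix ι ι ℂ)) :
    Submodule ℂ (Matrix ι ι ℂ) :=
  sInf {S : Submodule ℂ (Matrix ι ι ℂ) | W ⊆ S ∧ (∀ X ∈ S, Xᴴ ∈ S) ∧
    (∀ X ∈ S, ∀ Y ∈ S, X * mpinv ρ * Y ∈ S) ∧
    (∀ X ∈ S, msqrt ρ * X * mpinv (msqrt ρ) ∈ S)}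

/-- `ρ` is globally asymptotically stable for the generator `L`: it is invariant and every
solution of `ẋ = L(x)` starting at a density operator converges to `ρ` as `t → ∞`. -/
def IsGAS (L : Matrix ι ι ℂ →ₗ[ℂ] Matrix ι ι ℂ) (ρ : Matrix ι ι ℂ) : Prop :=
  L ρ = 0 ∧
  ∀ σ : Matrix ι ι ℂ, IsDensity σ →
    ∀ x : ℝ → Matrix ι ι ℂ, x 0 = σ →
      (∀ t : ℝ, ∀ i j, HasDerivAt (fun s : ℝ => x s i j) (L (x t) i j) t) →
      ∀ i j, Filter.Tendsto (fun t : ℝ => x t i j) Filter.atTop (nhds (ρ i j))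

end Single

/-! ### Bipartite notions -/

section Bipartite

variable {α β : Type*} [Fintype α] [Fintype β] [DecidableEq α] [DecidableEq β]

/-- Partial trace over the second factor. -/
noncomputable def ptraceB (ρ : Matrix (α × β) (α × β) ℂ) : Matrix α α ℂ :=
  Matrix.of fun i j => ∑ k : β, ρ (i, k) (j, k)

/-- The operator Schmidt span of `ρ` on the first factor:
`{Tr_B[(I ⊗ B) ρ] : B ∈ B(H_B)}`. -/
noncomputable def opSchmidtA (ρ : Matrix (α × β) (α × β) ℂ) : Set (Matrix α α ℂ) :=
  {A | ∃ B : Matrix β β ℂ,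
    A = ptraceB ((Matrix.kroneckerMap (· * ·) (1 : Matrix α α ℂ) B) * ρ)}

/-- The (vector) Schmidt span of `v ∈ V_A ⊗ V_B` relative to `V_A`: the image of `v`
under partial inner products with vectors of `V_B`. -/
def vSchmidtA (v : α × β → ℂ) : Set (α → ℂ) :=
  {w | ∃ b : β → ℂ, w = fun a => ∑ j, (starRingEnd ℂ) (b j) * v (a, j)}

/-- `Σ_A(v) ⊗ V_B` as a subspace of `V_A ⊗ V_B`. -/
noncomputable def extVSchmidtA (v : α × β → ℂ) : Submodule ℂ (α × β → ℂ) :=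
  Submodule.span ℂ {v' | ∃ w ∈ vSchmidtA v, ∃ b : β → ℂ, v' = fun p => w p.1 * b p.2}

end Bipartite

/-! ### Multipartite notions -/

section Multipartite

variable {n : ℕ} {d : Fin n → Type*} [∀ a, Fintype (d a)] [∀ a, DecidableEq (d a)]

/-- Index type of the neighborhood factor `H_N`. -/
abbrev nbhdIdx (d : Fin n → Type*) (N : Finset (Fin n)) : Type _ :=
  ∀ a : {x : Fin n // x ∈ N}, d a

/-- Index type of the complementary factor `H_N̄`. -/
abbrev nbhdCoIdx (d : Fin n → Type*) (N : Finset (Fin n)) : Type _ :=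
  ∀ a : {x : Fin n // ¬ x ∈ N}, d a

/-- The factorization `H ≃ H_N ⊗ H_N̄` at the level of index types. -/
def splitEquiv (d : Fin n → Type*) (N : Finset (Fin n)) :
    (∀ a, d a) ≃ nbhdIdx d N × nbhdCoIdx d N :=
  Equiv.piEquivPiSubtypeProd (fun x => x ∈ N) d

variable (d)

/-- The operator `A ⊗ B` on `H = H_N ⊗ H_N̄`, viewed as an operator on `H`. -/
noncomputable def splitLift (N : Finset (Fin n))
    (A : Matrix (nbhdIdx d N) (nbhdIdx d N) ℂ)
    (B : Matrix (nbhdCoIdx d N) (nbhdCoIdx d N) ℂ) :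
    Matrix (∀ a, d a) (∀ a, d a) ℂ :=
  (Matrix.kroneckerMap (· * ·) A B).submatrix (splitEquiv d N) (splitEquiv d N)

/-- The neighborhood operator `A ⊗ I_N̄` on `H`. -/
noncomputable def nbhdLift (N : Finset (Fin n))
    (A : Matrix (nbhdIdx d N) (nbhdIdx d N) ℂ) : Matrix (∀ a, d a) (∀ a, d a) ℂ :=
  splitLift d N A 1

/-- The operator `I_N ⊗ B` on `H`. -/
noncomputable def coLift (N : Finset (Fin n))
    (B : Matrix (nbhdCoIdx d N) (nbhdCoIdx d N) ℂ) : Matrix (∀ a, d a) (∀ a, d a) ℂ :=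
  splitLift d N 1 B

/-- The reduced state `ρ_N = Tr_N̄(ρ)` on the neighborhood `N`. -/
noncomputable def nbhdPtrace (N : Finset (Fin n)) (ρ : Matrix (∀ a, d a) (∀ a, d a) ℂ) :
    Matrix (nbhdIdx d N) (nbhdIdx d N) ℂ :=
  Matrix.of fun i j => ∑ k : nbhdCoIdx d N,
    ρ ((splitEquiv d N).symm (i, k)) ((splitEquiv d N).symm (j, k))

/-- The operator Schmidt span of `ρ` on the neighborhood `N`:
`Σ_N(ρ) = {Tr_N̄[(I_N ⊗ B) ρ] : B}`. -/
noncomputable def nbhdSchmidt (N : Finset (Fin n)) (ρ : Matrix (∀ a, d a) (∀ a, d a) ℂ) :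
    Set (Matrix (nbhdIdx d N) (nbhdIdx d N) ℂ) :=
  {A | ∃ B : Matrix (nbhdCoIdx d N) (nbhdCoIdx d N) ℂ,
    A = nbhdPtrace d N (coLift d N B * ρ)}

/-- The extended minimal modular-invariant distorted algebra
`F_{ρ_N}(Σ_N(ρ)) ⊗ B(H_N̄)` as a subspace of `B(H)`. -/
noncomputable def extF (N : Finset (Fin n)) (ρ : Matrix (∀ a, d a) (∀ a, d a) ℂ) :
    Submodule ℂ (Matrix (∀ a, d a) (∀ a, d a) ℂ) :=
  Submodule.span ℂ {X | ∃ A ∈ Fdist (nbhdPtrace d N ρ) (nbhdSchmidt d N ρ),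
    ∃ B : Matrix (nbhdCoIdx d N) (nbhdCoIdx d N) ℂ, X = splitLift d N A B}

/-- A neighborhood QDS generator for `N`: a Lindblad generator whose Hamiltonian and
noise operators all act as `X_N ⊗ I_N̄`. -/
def IsNbhdGen (N : Finset (Fin n))
    (L : Matrix (∀ a, d a) (∀ a, d a) ℂ →ₗ[ℂ] Matrix (∀ a, d a) (∀ a, d a) ℂ) : Prop :=
  ∃ HN : Matrix (nbhdIdx d N) (nbhdIdx d N) ℂ, HN.IsHermitian ∧
    ∃ (m : ℕ) (Lk : Fin m → Matrix (nbhdIdx d N) (nbhdIdx d N) ℂ),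
      L = lindbladMap (nbhdLift d N HN) fun k => nbhdLift d N (Lk k)

/-- A purely dissipative neighborhood generator for `N` (zero Hamiltonian in some
Lindblad representation). -/
def IsDissipNbhdGen (N : Finset (Fin n))
    (L : Matrix (∀ a, d a) (∀ a, d a) ℂ →ₗ[ℂ] Matrix (∀ a, d a) (∀ a, d a) ℂ) : Prop :=
  ∃ (m : ℕ) (Lk : Fin m → Matrix (nbhdIdx d N) (nbhdIdx d N) ℂ),
    L = lindbladMap 0 fun k => nbhdLift d N (Lk k)

/-- The family of neighborhood generators `Lj` is frustration free: every invariant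
state of the sum is invariant for each component. -/
def IsFFFamily {M : ℕ}
    (Lj : Fin M → (Matrix (∀ a, d a) (∀ a, d a) ℂ →ₗ[ℂ] Matrix (∀ a, d a) (∀ a, d a) ℂ)) :
    Prop :=
  ∀ ρ : Matrix (∀ a, d a) (∀ a, d a) ℂ, IsDensity ρ → (∑ j, Lj j) ρ = 0 → ∀ j, Lj j ρ = 0

/-- `ρ` is frustration-free quasi-locally stabilizable relative to the neighborhood
structure `Nb`. -/
def IsFFQLS {M : ℕ} (Nb : Fin M → Finset (Fin n))
    (ρ : Matrix (∀ a, d a) (∀ a, d a) ℂ) : Prop :=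
  ∃ Lj : Fin M → (Matrix (∀ a, d a) (∀ a, d a) ℂ →ₗ[ℂ] Matrix (∀ a, d a) (∀ a, d a) ℂ),
    (∀ j, IsNbhdGen d (Nb j) (Lj j)) ∧ IsFFFamily d Lj ∧ IsGAS (∑ j, Lj j) ρ

/-- A pure state `|ψ⟩⟨ψ|` is dissipatively quasi-locally stabilizable relative to `Nb`:
it is GAS for a QL generator whose components have zero Hamiltonian and neighborhood
noise operators annihilating `ψ`. -/
def IsDQLS {M : ℕ} (Nb : Fin M → Finset (Fin n)) (ψ : (∀ a, d a) → ℂ) : Prop :=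
  ∃ Lj : Fin M → (Matrix (∀ a, d a) (∀ a, d a) ℂ →ₗ[ℂ] Matrix (∀ a, d a) (∀ a, d a) ℂ),
    (∀ j, ∃ (m : ℕ) (Dk : Fin m → Matrix (nbhdIdx d (Nb j)) (nbhdIdx d (Nb j)) ℂ),
      Lj j = lindbladMap 0 (fun k => nbhdLift d (Nb j) (Dk k)) ∧
      ∀ k, (nbhdLift d (Nb j) (Dk k)).mulVec ψ = 0) ∧
    IsGAS (∑ j, Lj j) (Matrix.vecMulVec ψ (star ψ))

/-- The (vector) Schmidt span of `ψ` relative to the neighborhood factor `H_N`. -/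
def vecSchmidt (N : Finset (Fin n)) (ψ : (∀ a, d a) → ℂ) : Set (nbhdIdx d N → ℂ) :=
  {w | ∃ b : nbhdCoIdx d N → ℂ,
    w = fun i => ∑ k, (starRingEnd ℂ) (b k) * ψ ((splitEquiv d N).symm (i, k))}

/-- `Σ_N(ψ) ⊗ H_N̄` as a subspace of `H`. -/
noncomputable def extVecSchmidt (N : Finset (Fin n)) (ψ : (∀ a, d a) → ℂ) :
    Submodule ℂ ((∀ a, d a) → ℂ) :=
  Submodule.span ℂ {v | ∃ w ∈ vecSchmidt d N ψ, ∃ b : nbhdCoIdx d N → ℂ,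
    v = fun x => w ((splitEquiv d N) x).1 * b ((splitEquiv d N) x).2}

end Multipartite

/-!
The space `F_τ(W) τ⁻¹` is a unital `*`-algebra `𝒜`: right multiplication by `τ⁻¹` straightens the
`τ`-modified product, and modular invariance gives closure under the adjoint. By the double
commutant theorem `𝒜` is the commutant of `𝒜'`, and `𝒜'` is invariant under the modular map, hence
spanned by modular eigenoperators `A`. With `τ = ρ_N` and `W = Σ_N(ρ)`, each such `A ⊗ I` is a
modular eigenoperator of `ρ` itself, because every block of `ρ` over `N̄` lies in `F_τ(W) = 𝒜 τ`.
It therefore defines a Davies-type dissipator in detailed balance with `ρ`, whose Dirichlet form at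
`Z ρ` is a sum of squares of the commutators of `Z` with `A ⊗ I` and its adjoint. Summing over `A`,
the Dirichlet form of the neighborhood vanishes only on `F_τ(W) ⊗ B(H_N̄)`, and so does the
generator itself wherever the form vanishes.

Nonnegative forms add without cancellation, so the total form vanishes only on the intersection
`span ρ`. Hence the sum is frustration free, and on trace-zero operators the total form is positive
definite, which makes their `ρ`-weighted norm decay exponentially.
-/

section DoubleCommutant

variable {𝕜 : Type*} [RCLike 𝕜]
variable {E : Type*} [NormedAddCommGroup E] [InnerProductSpace 𝕜 E] [FiniteDimensional 𝕜 E]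

theorem isSemisimpleModule_starSubalgebra (A : StarSubalgebra 𝕜 (Module.End 𝕜 E)) :
    IsSemisimpleModule A.toSubalgebra E := by
  refine (isSemisimpleModule_iff A.toSubalgebra E).mpr ⟨fun p ↦ ?_⟩
  let V : Submodule 𝕜 E := p.restrictScalars 𝕜
  have orthogonal_invariant (a : A.toSubalgebra) {v : E} (hv : v ∈ Vᗮ) : a • v ∈ Vᗮ := by
    intro u hu
    rw [show a • v = (a : Module.End 𝕜 E) v from rfl, ← LinearMap.adjoint_inner_left]
    exact hv _ (p.smul_mem
      (⟨star (a : Module.End 𝕜 E), star_mem (s := A) a.2⟩ : A.toSubalgebra) hu)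
  let q : Submodule A.toSubalgebra E :=
    { Vᗮ.toAddSubmonoid with smul_mem' := fun a _ hv ↦ orthogonal_invariant a hv }
  refine ⟨q, disjoint_iff.mpr ?_, codisjoint_iff.mpr ?_⟩
  · exact (Submodule.eq_bot_iff _).mpr fun v hv ↦
      Submodule.disjoint_def.mp V.orthogonal_disjoint v hv.1 hv.2
  · refine Submodule.eq_top_iff'.mpr fun v ↦ ?_
    obtain ⟨y, hy, z, hz, rfl⟩ :=
      Submodule.mem_sup.mp (V.sup_orthogonal_of_hasOrthogonalProjection.ge
        (Submodule.mem_top (x := v)))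
    exact Submodule.add_mem_sup (S := p) hy hz

-- An operator commuting with `A'` is linear over `End_A E`; Jacobson density realises it in `A`.
theorem centralizer_centralizer_starSubalgebra_end (A : StarSubalgebra 𝕜 (Module.End 𝕜 E)) :
    (A : Set (Module.End 𝕜 E)).centralizer.centralizer = A := by
  refine Set.Subset.antisymm (fun x hx ↦ ?_) Set.subset_centralizer_centralizer
  have := isSemisimpleModule_starSubalgebra A
  let f : Module.End (Module.End A.toSubalgebra E) E :=
    { x with
      map_smul' := fun c v ↦ by
        have hc : (c.restrictScalars 𝕜 : Module.End 𝕜 E) ∈ (A : Set _).centralizer :=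
          fun a ha ↦ LinearMap.ext fun w ↦ (c.map_smul (⟨a, ha⟩ : A.toSubalgebra) w).symm
        exact (LinearMap.congr_fun (hx _ hc) v).symm }
  obtain ⟨s, hs⟩ := Module.Finite.fg_top (R := 𝕜) (M := E)
  obtain ⟨a, ha⟩ := jacobson_density f s
  have hxa : x = a := LinearMap.ext_on hs fun v hv ↦ ha v hv
  exact hxa ▸ a.2

theorem centralizer_centralizer_starSubalgebra_matrix {ι : Type*} [Fintype ι] [DecidableEq ι]
    (A : StarSubalgebra 𝕜 (Matrix ι ι 𝕜)) :
    (A : Set (Matrix ι ι 𝕜)).centralizer.centralizer = A := by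
  refine Set.Subset.antisymm (fun x hx ↦ ?_) Set.subset_centralizer_centralizer
  let e := (LinearMap.toMatrixOrthonormal (EuclideanSpace.basisFun ι 𝕜)).symm
  have hex : e x ∈ A.map (e : Matrix ι ι 𝕜 →⋆ₐ[𝕜] Module.End 𝕜 (EuclideanSpace 𝕜 ι)) := by
    rw [← SetLike.mem_coe, ← centralizer_centralizer_starSubalgebra_end]
    intro c hc
    have hc' : e.symm c ∈ (A : Set (Matrix ι ι 𝕜)).centralizer :=
      fun a ha ↦ EquivLike.injective e <| by simpa using hc (e a) ⟨a, ha, rfl⟩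
    simpa using congrArg e (hx _ hc')
  obtain ⟨a, ha, hax⟩ := hex
  exact EquivLike.injective e hax ▸ ha

end DoubleCommutant

section TraceForm

variable {𝕜 ι : Type*} [RCLike 𝕜] [Fintype ι] {M : Matrix ι ι 𝕜}

theorem trace_mul_mul_conjTranspose_nonneg (hM : M.PosSemidef) (X : Matrix ι ι 𝕜) :
    0 ≤ (X * M * Xᴴ).trace :=
  (hM.mul_mul_conjTranspose_same X).trace_nonneg

theorem trace_mul_mul_conjTranspose_eq_zero_iff (hM : M.PosDef) {X : Matrix ι ι 𝕜} :
    (X * M * Xᴴ).trace = 0 ↔ X = 0 :=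
  letI := M.toMatrixNormedAddCommGroup hM
  letI := M.toMatrixInnerProductSpace hM.posSemidef
  inner_self_eq_zero (𝕜 := 𝕜) (x := X)

theorem trace_mul_mul_conjTranspose_pos (hM : M.PosDef) {X : Matrix ι ι 𝕜} (hX : X ≠ 0) :
    0 < (X * M * Xᴴ).trace :=
  (trace_mul_mul_conjTranspose_nonneg hM.posSemidef X).lt_of_ne'
    ((trace_mul_mul_conjTranspose_eq_zero_iff hM).not.mpr hX)

end TraceForm

section ModularMap

variable {ι : Type*} [Fintype ι] {τ L : Matrix ι ι ℂ} {ω : ℝ}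

/-- `L` is an eigenoperator of the modular map `X ↦ τ X τ⁻¹` of `τ`, with eigenvalue `ω > 0`.
The eigenvalue equation is stated without `τ⁻¹`. -/
structure IsModularEigenop (τ L : Matrix ι ι ℂ) (ω : ℝ) : Prop where
  pos : 0 < ω
  mul_eq : τ * L = (ω : ℂ) • (L * τ)

namespace IsModularEigenop

theorem ne_zero (h : IsModularEigenop τ L ω) : (ω : ℂ) ≠ 0 := by
  exact_mod_cast h.pos.ne'

theorem mul_eq_inv_smul (h : IsModularEigenop τ L ω) : L * τ = (ω⁻¹ : ℂ) • (τ * L) := by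
  rw [h.mul_eq, inv_smul_smul₀ h.ne_zero]

theorem conjTranspose (h : IsModularEigenop τ L ω) (hτ : τ.IsHermitian) :
    IsModularEigenop τ Lᴴ ω⁻¹ where
  pos := inv_pos.mpr h.pos
  mul_eq := by
    have := congrArg Matrix.conjTranspose h.mul_eq_inv_smul
    simpa [conjTranspose_smul, hτ.eq] using this

end IsModularEigenop

variable [DecidableEq ι]

/-- The modular map `X ↦ τ X τ⁻¹`, the square of the map `X ↦ τ^{1/2} X τ^{-1/2}` in `Fdist`. -/
noncomputable def modularMap (τ : Matrix ι ι ℂ) : Module.End ℂ (Matrix ι ι ℂ) :=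
  LinearMap.mulLeftRight ℂ (τ, τ⁻¹)

theorem modularMap_apply (τ X : Matrix ι ι ℂ) : modularMap τ X = τ * X * τ⁻¹ :=
  LinearMap.mulLeftRight_apply ..

theorem iSup_eigenspace_modularMap (hτ : τ.IsHermitian) :
    ⨆ μ : ℂ, (modularMap τ).eigenspace μ = ⊤ := by
  let _ := (1 : Matrix ι ι ℂ).toMatrixNormedAddCommGroup .one
  let _ := (1 : Matrix ι ι ℂ).toMatrixInnerProductSpace .one
  have hsymm : (modularMap τ).IsSymmetric := fun X Y ↦ by
    change (Y * 1 * (modularMap τ X)ᴴ).trace = (modularMap τ Y * 1 * Xᴴ).trace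
    simp only [modularMap_apply, Matrix.mul_one, conjTranspose_mul, hτ.eq, hτ.inv.eq,
      Matrix.mul_assoc]
    rw [trace_mul_comm τ]
    simp only [Matrix.mul_assoc]
  exact Submodule.orthogonal_eq_bot_iff.mp hsymm.orthogonalComplement_iSup_eigenspaces_eq_bot

theorem exists_isModularEigenop (hτ : τ.PosDef) {μ : ℂ} (hL : L ∈ (modularMap τ).eigenspace μ)
    (hL0 : L ≠ 0) : ∃ ω, IsModularEigenop τ L ω := by
  have hmul : τ * L = μ • (L * τ) := by
    have h := Module.End.mem_eigenspace_iff.mp hL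
    rw [modularMap_apply] at h
    rw [← Matrix.smul_mul, ← h, nonsing_inv_mul_cancel_right]
    exact (isUnit_iff_isUnit_det τ).mp hτ.isUnit
  have htrace : (Lᴴ * τ * L).trace = μ * (L * τ * Lᴴ).trace := by
    rw [Matrix.mul_assoc, hmul, Matrix.mul_smul, trace_smul, smul_eq_mul,
      trace_mul_comm]
  have hμ : 0 < μ := by
    refine pos_of_mul_pos_left (htrace ▸ ?_)
      (trace_mul_mul_conjTranspose_nonneg hτ.posSemidef L)
    simpa using trace_mul_mul_conjTranspose_pos hτ (conjTranspose_eq_zero.not.mpr hL0)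
  obtain ⟨ω, hω, rfl⟩ := RCLike.pos_iff_exists_ofReal.mp hμ
  exact ⟨ω, hω, hmul⟩

theorem le_span_isModularEigenop (hτ : τ.PosDef) {C : Submodule ℂ (Matrix ι ι ℂ)}
    (hC : ∀ X ∈ C, modularMap τ X ∈ C) :
    C ≤ Submodule.span ℂ {L | L ∈ C ∧ ∃ ω, IsModularEigenop τ L ω} := by
  refine (Submodule.eq_iSup_inf_genEigenspace 1 hC
    (iSup_eigenspace_modularMap hτ.isHermitian)).le.trans ?_
  refine iSup_le fun μ L hL ↦ ?_
  rcases eq_or_ne L 0 with rfl | hL0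
  · exact zero_mem _
  · exact Submodule.subset_span ⟨hL.1, exists_isModularEigenop hτ hL.2 hL0⟩

end ModularMap

section Dissipator

variable {ι : Type*} [Fintype ι] {ρ L : Matrix ι ι ℂ} {ω : ℝ}

/-- The dissipator `X ↦ L X L† - ½{L†L, X}` of a single noise operator `L`. -/
noncomputable def dissipator (L : Matrix ι ι ℂ) : Matrix ι ι ℂ →ₗ[ℂ] Matrix ι ι ℂ :=
  LinearMap.mulRight ℂ Lᴴ ∘ₗ LinearMap.mulLeft ℂ L -
    ((1 : ℂ) / 2) • (LinearMap.mulLeft ℂ (Lᴴ * L) + LinearMap.mulRight ℂ (Lᴴ * L))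

theorem dissipator_apply (L X : Matrix ι ι ℂ) :
    dissipator L X = L * X * Lᴴ - ((1 : ℂ) / 2) • (Lᴴ * L * X + X * (Lᴴ * L)) :=
  rfl

theorem dissipator_smul (c : ℂ) (L : Matrix ι ι ℂ) :
    dissipator (c • L) = (star c * c) • dissipator L := by
  ext1 X
  simp only [dissipator_apply, LinearMap.smul_apply, conjTranspose_smul, Matrix.smul_mul,
    Matrix.mul_smul]
  module

theorem trace_dissipator_apply (L X : Matrix ι ι ℂ) : (dissipator L X).trace = 0 := by
  rw [dissipator_apply, trace_sub, trace_smul, trace_add, trace_mul_comm X, trace_mul_cycle,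
    smul_eq_mul]
  ring

/-- The dissipator of the pair of noise operators `L`, `ω^{-1/2} L†`, which satisfies detailed
balance with respect to `ρ` when `ρ L = ω L ρ`. -/
noncomputable def balancedDissipator (L : Matrix ι ι ℂ) (ω : ℝ) :
    Matrix ι ι ℂ →ₗ[ℂ] Matrix ι ι ℂ :=
  dissipator L + (ω⁻¹ : ℂ) • dissipator Lᴴ

theorem dissipator_mul (hρ : ρ.IsHermitian) (h : IsModularEigenop ρ L ω) (Z : Matrix ι ι ℂ) :
    dissipator L (Z * ρ) =
      ((ω⁻¹ : ℂ) • (L * Z * Lᴴ) - ((1 : ℂ) / 2) • (Lᴴ * L * Z + Z * (Lᴴ * L))) * ρ := by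
  have mul_conjTranspose : ρ * Lᴴ = (ω⁻¹ : ℂ) • (Lᴴ * ρ) := by
    simpa using (h.conjTranspose hρ).mul_eq
  have comm : ρ * (Lᴴ * L) = Lᴴ * L * ρ := by
    rw [← Matrix.mul_assoc, mul_conjTranspose, Matrix.smul_mul, Matrix.mul_assoc, h.mul_eq,
      Matrix.mul_smul, inv_smul_smul₀ h.ne_zero, Matrix.mul_assoc]
  rw [dissipator_apply, Matrix.mul_assoc Z, comm, ← Matrix.mul_assoc L, Matrix.mul_assoc _ ρ,
    mul_conjTranspose]
  simp only [Matrix.sub_mul, Matrix.add_mul, Matrix.smul_mul, Matrix.mul_smul, Matrix.mul_assoc]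

theorem balancedDissipator_mul (hρ : ρ.IsHermitian) (h : IsModularEigenop ρ L ω)
    (Z : Matrix ι ι ℂ) :
    balancedDissipator L ω (Z * ρ) = ((1 : ℂ) / 2) •
      ((((ω⁻¹ : ℂ) • (⁅L, Z⁆ * Lᴴ) - Lᴴ * ⁅L, Z⁆) +
        (ω⁻¹ : ℂ) • ((ω : ℂ) • (⁅Lᴴ, Z⁆ * L) - L * ⁅Lᴴ, Z⁆)) * ρ) := by
  rw [balancedDissipator, LinearMap.add_apply, LinearMap.smul_apply, dissipator_mul hρ h,
    dissipator_mul hρ (h.conjTranspose hρ), ← Matrix.smul_mul _ _ ρ,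
    ← Matrix.smul_mul _ _ ρ, ← Matrix.add_mul]
  congr 1
  simp only [Ring.lie_def, Matrix.sub_mul, Matrix.mul_sub, Matrix.mul_assoc,
    conjTranspose_conjTranspose, Complex.ofReal_inv, inv_inv, smul_sub, smul_add,
    inv_smul_smul₀ h.ne_zero]
  module

theorem balancedDissipator_mul_eq_zero (hρ : ρ.IsHermitian) (h : IsModularEigenop ρ L ω)
    {Z : Matrix ι ι ℂ} (hL : Commute L Z) (hL' : Commute Lᴴ Z) :
    balancedDissipator L ω (Z * ρ) = 0 := by
  rw [balancedDissipator_mul hρ h, hL.lie_eq, hL'.lie_eq]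
  simp

theorem trace_smul_mul_conjTranspose_sub_conjTranspose_mul (hρ : ρ.IsHermitian)
    (h : IsModularEigenop ρ L ω) (C Z : Matrix ι ι ℂ) :
    (((ω⁻¹ : ℂ) • (C * Lᴴ) - Lᴴ * C) * ρ * Zᴴ).trace = -(C * ρ * ⁅L, Z⁆ᴴ).trace := by
  have conjTranspose_mul_eq : (ω⁻¹ : ℂ) • (Lᴴ * ρ) = ρ * Lᴴ := by
    simpa using (h.conjTranspose hρ).mul_eq.symm
  calc (((ω⁻¹ : ℂ) • (C * Lᴴ) - Lᴴ * C) * ρ * Zᴴ).trace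
      = (C * ((ω⁻¹ : ℂ) • (Lᴴ * ρ)) * Zᴴ).trace - (Lᴴ * (C * ρ * Zᴴ)).trace := by
        simp only [Matrix.sub_mul, Matrix.smul_mul, Matrix.mul_smul, trace_sub, Matrix.mul_assoc]
    _ = (C * ρ * (Lᴴ * Zᴴ)).trace - (C * ρ * (Zᴴ * Lᴴ)).trace := by
        rw [conjTranspose_mul_eq, trace_mul_comm Lᴴ]
        simp only [Matrix.mul_assoc]
    _ = -(C * ρ * ⁅L, Z⁆ᴴ).trace := by
        rw [Ring.lie_def, conjTranspose_sub, conjTranspose_mul, conjTranspose_mul,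
          Matrix.mul_sub, trace_sub, neg_sub]

variable [DecidableEq ι]

theorem lindbladMap_zero {m : ℕ} (L : Fin m → Matrix ι ι ℂ) :
    lindbladMap 0 L = ∑ k, dissipator (L k) := by
  simp [lindbladMap, dissipator]

theorem trace_lindbladMap_zero_apply {m : ℕ} (L : Fin m → Matrix ι ι ℂ) (X : Matrix ι ι ℂ) :
    (lindbladMap 0 L X).trace = 0 := by
  simp [lindbladMap_zero, LinearMap.sum_apply, trace_sum, trace_dissipator_apply]

/-- The Dirichlet form `X ↦ -⟪X, D X⟫` of `D` for the inner product `⟪X, Y⟫ = Tr(Y ρ⁻¹ X†)`. -/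
noncomputable def dirichletForm (ρ : Matrix ι ι ℂ) (D : Matrix ι ι ℂ →ₗ[ℂ] Matrix ι ι ℂ)
    (X : Matrix ι ι ℂ) : ℂ :=
  -(D X * ρ⁻¹ * Xᴴ).trace

theorem dirichletForm_sum {κ : Type*} (s : Finset κ) (ρ : Matrix ι ι ℂ)
    (D : κ → Matrix ι ι ℂ →ₗ[ℂ] Matrix ι ι ℂ) (X : Matrix ι ι ℂ) :
    dirichletForm ρ (∑ k ∈ s, D k) X = ∑ k ∈ s, dirichletForm ρ (D k) X := by
  simp [dirichletForm, LinearMap.sum_apply, Finset.sum_mul, trace_sum]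

theorem dirichletForm_sum_nonneg {κ : Type*} {s : Finset κ}
    {D : κ → Matrix ι ι ℂ →ₗ[ℂ] Matrix ι ι ℂ} {X : Matrix ι ι ℂ}
    (h : ∀ k ∈ s, 0 ≤ dirichletForm ρ (D k) X) : 0 ≤ dirichletForm ρ (∑ k ∈ s, D k) X :=
  dirichletForm_sum s ρ D X ▸ Finset.sum_nonneg h

theorem dirichletForm_sum_eq_zero_iff {κ : Type*} {s : Finset κ}
    {D : κ → Matrix ι ι ℂ →ₗ[ℂ] Matrix ι ι ℂ} {X : Matrix ι ι ℂ}
    (h : ∀ k ∈ s, 0 ≤ dirichletForm ρ (D k) X) :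
    dirichletForm ρ (∑ k ∈ s, D k) X = 0 ↔ ∀ k ∈ s, dirichletForm ρ (D k) X = 0 := by
  rw [dirichletForm_sum, Finset.sum_eq_zero_iff_of_nonneg h]

theorem dirichletForm_balancedDissipator (hρ : ρ.PosDef) (h : IsModularEigenop ρ L ω)
    (Z : Matrix ι ι ℂ) :
    dirichletForm ρ (balancedDissipator L ω) (Z * ρ) = ((1 : ℂ) / 2) *
      ((⁅L, Z⁆ * ρ * ⁅L, Z⁆ᴴ).trace + (ω⁻¹ : ℂ) * (⁅Lᴴ, Z⁆ * ρ * ⁅Lᴴ, Z⁆ᴴ).trace) := by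
  have cancel : ρ * (ρ⁻¹ * (Z * ρ)ᴴ) = ρ * Zᴴ := by
    rw [Matrix.mul_nonsing_inv_cancel_left _ _ ((isUnit_iff_isUnit_det ρ).mp hρ.isUnit),
      conjTranspose_mul, hρ.isHermitian.eq]
  have htrace := trace_smul_mul_conjTranspose_sub_conjTranspose_mul hρ.isHermitian h ⁅L, Z⁆ Z
  have htrace' := trace_smul_mul_conjTranspose_sub_conjTranspose_mul hρ.isHermitian
    (h.conjTranspose hρ.isHermitian) ⁅Lᴴ, Z⁆ Z
  rw [conjTranspose_conjTranspose, Complex.ofReal_inv, inv_inv] at htrace'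
  rw [dirichletForm, balancedDissipator_mul hρ.isHermitian h, Matrix.mul_assoc, Matrix.smul_mul,
    Matrix.mul_assoc, cancel, ← Matrix.mul_assoc, Matrix.add_mul, Matrix.add_mul,
    Matrix.smul_mul, Matrix.smul_mul, trace_smul, trace_add, trace_smul, htrace, htrace',
    smul_eq_mul, smul_eq_mul]
  ring

theorem dirichletForm_balancedDissipator_mul_nonneg (hρ : ρ.PosDef) (h : IsModularEigenop ρ L ω)
    (Z : Matrix ι ι ℂ) : 0 ≤ dirichletForm ρ (balancedDissipator L ω) (Z * ρ) := by
  have hω : (0 : ℂ) ≤ (ω : ℂ)⁻¹ := by exact_mod_cast (inv_pos.mpr h.pos).le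
  rw [dirichletForm_balancedDissipator hρ h]
  exact mul_nonneg (by positivity) <|
    add_nonneg (trace_mul_mul_conjTranspose_nonneg hρ.posSemidef _)
      (mul_nonneg hω (trace_mul_mul_conjTranspose_nonneg hρ.posSemidef _))

theorem dirichletForm_balancedDissipator_mul_eq_zero_iff (hρ : ρ.PosDef)
    (h : IsModularEigenop ρ L ω) {Z : Matrix ι ι ℂ} :
    dirichletForm ρ (balancedDissipator L ω) (Z * ρ) = 0 ↔ Commute L Z ∧ Commute Lᴴ Z := by
  have hω : (0 : ℂ) ≤ (ω : ℂ)⁻¹ := by exact_mod_cast (inv_pos.mpr h.pos).le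
  rw [dirichletForm_balancedDissipator hρ h, mul_eq_zero_iff_left (by norm_num),
    add_eq_zero_iff_of_nonneg (trace_mul_mul_conjTranspose_nonneg hρ.posSemidef _)
      (mul_nonneg hω (trace_mul_mul_conjTranspose_nonneg hρ.posSemidef _)),
    mul_eq_zero_iff_left (inv_ne_zero h.ne_zero), trace_mul_mul_conjTranspose_eq_zero_iff hρ,
    trace_mul_mul_conjTranspose_eq_zero_iff hρ, commute_iff_lie_eq, commute_iff_lie_eq]

theorem dirichletForm_self (hρ : ρ.PosDef) (D : Matrix ι ι ℂ →ₗ[ℂ] Matrix ι ι ℂ) :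
    dirichletForm ρ D ρ = -(D ρ).trace := by
  rw [dirichletForm, hρ.isHermitian.eq,
    nonsing_inv_mul_cancel_right _ _ ((isUnit_iff_isUnit_det ρ).mp hρ.isUnit)]

end Dissipator

section Lyapunov

open Filter Topology
open scoped RealInnerProductSpace

variable {E : Type*} [NormedAddCommGroup E] [InnerProductSpace ℝ E] [FiniteDimensional ℝ E]
  {L : E →ₗ[ℝ] E} {K : Submodule ℝ E}

theorem exists_pos_inner_map_le_neg_mul_norm_sq (hL : ∀ x ∈ K, x ≠ 0 → ⟪x, L x⟫ < 0) :
    ∃ c > 0, ∀ x ∈ K, ⟪x, L x⟫ ≤ -c * ‖x‖ ^ 2 := by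
  have hcompact : IsCompact (Metric.sphere (0 : E) 1 ∩ K) :=
    (isCompact_sphere 0 1).inter_right K.closed_of_finiteDimensional
  have hcont : Continuous fun x ↦ ⟪x, L x⟫ :=
    continuous_id.inner L.continuous_of_finiteDimensional
  have normalize_mem {x : E} (hx : x ∈ K) (hx0 : x ≠ 0) :
      ‖x‖⁻¹ • x ∈ Metric.sphere (0 : E) 1 ∩ K :=
    ⟨by simp [norm_smul, norm_ne_zero_iff.mpr hx0], K.smul_mem _ hx⟩
  rcases Set.eq_empty_or_nonempty (Metric.sphere (0 : E) 1 ∩ K) with hempty | hne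
  · refine ⟨1, one_pos, fun x hx ↦ ?_⟩
    obtain rfl : x = 0 := by_contra fun hx0 ↦ hempty.le (normalize_mem hx hx0)
    simp
  obtain ⟨u, ⟨hu, huK⟩, hmax⟩ := hcompact.exists_isMaxOn hne hcont.continuousOn
  have hu0 : u ≠ 0 := ne_zero_of_mem_unit_sphere ⟨u, hu⟩
  refine ⟨-⟪u, L u⟫, neg_pos.mpr (hL u huK hu0), fun x hx ↦ ?_⟩
  rcases eq_or_ne x 0 with rfl | hx0
  · simp
  have hle : ‖x‖⁻¹ * (‖x‖⁻¹ * ⟪x, L x⟫) ≤ ⟪u, L u⟫ := by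
    have h : ⟪‖x‖⁻¹ • x, L (‖x‖⁻¹ • x)⟫ ≤ ⟪u, L u⟫ := hmax (normalize_mem hx hx0)
    rwa [map_smul, real_inner_smul_left, real_inner_smul_right] at h
  have hpos : 0 < ‖x‖ := norm_pos_iff.mpr hx0
  field_simp at hle
  linarith

theorem tendsto_zero_of_inner_map_neg (hL : ∀ x ∈ K, x ≠ 0 → ⟪x, L x⟫ < 0) {y : ℝ → E}
    (hK : ∀ t, y t ∈ K) (hy : ∀ t, HasDerivAt y (L (y t)) t) : Tendsto y atTop (𝓝 0) := by
  obtain ⟨c, hc, hcK⟩ := exists_pos_inner_map_le_neg_mul_norm_sq hL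
  have hderiv (t : ℝ) : HasDerivAt (fun s ↦ Real.exp (2 * c * s) * ‖y s‖ ^ 2)
      (Real.exp (2 * c * t) * (2 * c) * ‖y t‖ ^ 2 +
        Real.exp (2 * c * t) * (2 * ⟪y t, L (y t)⟫)) t := by
    refine HasDerivAt.mul ?_ (hy t).norm_sq
    simpa using (((hasDerivAt_id t).const_mul (2 * c)).exp)
  have hanti : Antitone fun s ↦ Real.exp (2 * c * s) * ‖y s‖ ^ 2 := by
    refine antitone_of_hasDerivAt_nonpos hderiv fun t ↦ ?_
    have := mul_le_mul_of_nonneg_left (hcK _ (hK t)) (Real.exp_pos (2 * c * t)).le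
    rw [Pi.zero_apply]
    linarith
  have hbound (t : ℝ) (ht : 0 ≤ t) : ‖y t‖ ^ 2 ≤ Real.exp (-(2 * c * t)) * ‖y 0‖ ^ 2 := by
    rw [Real.exp_neg, ← div_eq_inv_mul, le_div_iff₀' (Real.exp_pos _)]
    simpa using hanti ht
  have hsq : Tendsto (fun t ↦ ‖y t‖ ^ 2) atTop (𝓝 0) := by
    refine squeeze_zero' (.of_forall fun t ↦ by positivity)
      ((eventually_ge_atTop 0).mono hbound) ?_
    have hexp : Tendsto (fun t : ℝ ↦ Real.exp (-(2 * c * t))) atTop (𝓝 0) :=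
      Real.tendsto_exp_neg_atTop_nhds_zero.comp (tendsto_id.const_mul_atTop (by positivity))
    simpa using hexp.mul_const (‖y 0‖ ^ 2)
  refine tendsto_zero_iff_norm_tendsto_zero.mpr ?_
  simpa using hsq.sqrt

end Lyapunov

section Stability

open Filter Topology

variable {E : Type*} [NormedAddCommGroup E]

section Entries

variable {m n : Type*} [Finite m] [Finite n] [NormedSpace ℂ E] {y : ℝ → Matrix m n ℂ}

theorem hasDerivAt_linearMap_of_entries (f : Matrix m n ℂ →ₗ[ℂ] E) {y' : Matrix m n ℂ} {t : ℝ}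
    (hy : ∀ i j, HasDerivAt (fun s ↦ y s i j) (y' i j) t) :
    HasDerivAt (fun s ↦ f (y s)) (f y') t := by
  classical
  cases nonempty_fintype m
  cases nonempty_fintype n
  have expand (X : Matrix m n ℂ) : f X = ∑ i, ∑ j, X i j • f (single i j 1) := by
    conv_lhs => rw [matrix_eq_sum_single X, map_sum]
    refine Finset.sum_congr rfl fun i _ ↦ ?_
    rw [map_sum]
    refine Finset.sum_congr rfl fun j _ ↦ ?_
    rw [← map_smul, smul_single, smul_eq_mul, mul_one]
  rw [expand y', funext fun s ↦ expand (y s)]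
  exact HasDerivAt.fun_sum fun i _ ↦ HasDerivAt.fun_sum fun j _ ↦ (hy i j).smul_const _

theorem tendsto_entries_of_linearEquiv (e : Matrix m n ℂ ≃ₗ[ℂ] E) {l : Filter ℝ}
    (hy : Tendsto (fun t ↦ e (y t)) l (𝓝 0)) (i : m) (j : n) :
    Tendsto (fun t ↦ y t i j) l (𝓝 0) := by
  have := e.finiteDimensional
  have hcont := (entryLinearMap ℂ ℂ i j ∘ₗ e.symm.toLinearMap).continuous_of_finiteDimensional
  simpa [Function.comp_def] using (hcont.tendsto' 0 0 (map_zero _)).comp hy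

end Entries

variable {ι : Type*} [Fintype ι] {ρ : Matrix ι ι ℂ} {L : Matrix ι ι ℂ →ₗ[ℂ] Matrix ι ι ℂ}

theorem trace_eq_of_hasDerivAt (hL : ∀ X, (L X).trace = 0) {x : ℝ → Matrix ι ι ℂ}
    (hx : ∀ t i j, HasDerivAt (fun s ↦ x s i j) (L (x t) i j) t) (t : ℝ) :
    (x t).trace = (x 0).trace := by
  have hderiv (t : ℝ) : HasDerivAt (fun s ↦ (x s).trace) 0 t := by
    rw [← hL (x t)]
    exact HasDerivAt.fun_sum fun i _ ↦ hx t i i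
  exact is_const_of_deriv_eq_zero (fun t ↦ (hderiv t).differentiableAt)
    (fun t ↦ (hderiv t).deriv) t 0

theorem isGAS_of_inner_map_neg [InnerProductSpace ℂ E] (e : Matrix ι ι ℂ ≃ₗ[ℂ] E)
    (hρ : ρ.trace = 1) (hLρ : L ρ = 0) (hL : ∀ X, (L X).trace = 0)
    (hneg : ∀ X, X.trace = 0 → X ≠ 0 → (inner ℂ (e X) (e (L X))).re < 0) : IsGAS L ρ := by
  refine ⟨hLρ, fun σ hσ x hx0 hx i j ↦ ?_⟩
  let _ : InnerProductSpace ℝ E := InnerProductSpace.complexToReal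
  have := e.finiteDimensional
  have := FiniteDimensional.complexToReal E
  let L' : E →ₗ[ℝ] E := (e.toLinearMap ∘ₗ L ∘ₗ e.symm.toLinearMap).restrictScalars ℝ
  let K : Submodule ℝ E :=
    (LinearMap.ker (traceLinearMap ι ℂ ℂ ∘ₗ e.symm.toLinearMap)).restrictScalars ℝ
  have hL' : ∀ v ∈ K, v ≠ 0 → inner ℝ v (L' v) < 0 := fun v hv hv0 ↦ by
    simpa [real_inner_eq_re_inner ℂ, L'] using hneg (e.symm v) hv (by simpa using hv0)
  have hK (t : ℝ) : e (x t - ρ) ∈ K := by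
    simp [K, hρ, trace_eq_of_hasDerivAt hL hx t, hx0, hσ.2]
  have hy (t : ℝ) : HasDerivAt (fun s ↦ e (x s - ρ)) (L' (e (x t - ρ))) t := by
    have : L' (e (x t - ρ)) = e (L (x t)) := by simp [L', hLρ]
    rw [this]
    exact hasDerivAt_linearMap_of_entries e.toLinearMap fun i j ↦ (hx t i j).sub_const (ρ i j)
  simpa using (tendsto_entries_of_linearEquiv e
    (tendsto_zero_of_inner_map_neg hL' hK hy) i j).add_const (ρ i j)

theorem isGAS_of_dirichletForm_pos [DecidableEq ι] (hρ : ρ.PosDef) (hρtr : ρ.trace = 1)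
    (hLρ : L ρ = 0) (hL : ∀ X, (L X).trace = 0)
    (hpos : ∀ X, X.trace = 0 → X ≠ 0 → 0 < dirichletForm ρ L X) : IsGAS L ρ := by
  refine @isGAS_of_inner_map_neg (Matrix ι ι ℂ) (ρ⁻¹.toMatrixNormedAddCommGroup hρ.inv) ι _ ρ L
    (ρ⁻¹.toMatrixInnerProductSpace hρ.inv.posSemidef) (.refl ℂ _) hρtr hLρ hL fun X hX hX0 ↦ ?_
  have h := (Complex.pos_iff.mp (hpos X hX hX0)).1
  rw [dirichletForm, Complex.neg_re] at h
  exact neg_pos.mp h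

end Stability

section DistortedAlgebra

variable {ι : Type*} [Fintype ι] {A τ X Y : Matrix ι ι ℂ} {W : Set (Matrix ι ι ℂ)}

open scoped MatrixOrder in
theorem msqrt_mul_self (hA : A.PosSemidef) : msqrt A * msqrt A = A := by
  classical
  have hex : ∃ B : Matrix ι ι ℂ, B.PosSemidef ∧ B * B = A :=
    ⟨CFC.sqrt A, (CFC.sqrt_nonneg A).posSemidef, CFC.sqrt_mul_sqrt_self A hA.nonneg⟩
  rw [msqrt, dif_pos hex]
  exact hex.choose_spec.2

theorem subset_Fdist : W ⊆ Fdist τ W := fun _ hX ↦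
  Submodule.mem_sInf.mpr fun _ hS ↦ hS.1 hX

theorem conjTranspose_mem_Fdist (hX : X ∈ Fdist τ W) : Xᴴ ∈ Fdist τ W :=
  Submodule.mem_sInf.mpr fun S hS ↦ hS.2.1 X (Submodule.mem_sInf.mp hX S hS)

theorem msqrt_mul_mul_mpinv_msqrt_mem_Fdist (hX : X ∈ Fdist τ W) :
    msqrt τ * X * mpinv (msqrt τ) ∈ Fdist τ W :=
  Submodule.mem_sInf.mpr fun S hS ↦ hS.2.2.2 X (Submodule.mem_sInf.mp hX S hS)

variable [DecidableEq ι]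

theorem mpinv_eq_nonsing_inv (hA : IsUnit A) : mpinv A = A⁻¹ := by
  have hdet := (isUnit_iff_isUnit_det A).mp hA
  have hex : ∃ B, A * B * A = A ∧ B * A * B = B ∧ (A * B)ᴴ = A * B ∧ (B * A)ᴴ = B * A :=
    ⟨A⁻¹, by simp [mul_nonsing_inv A hdet, nonsing_inv_mul A hdet]⟩
  rw [mpinv, dif_pos hex]
  refine (inv_eq_left_inv (hA.mul_left_cancel ?_)).symm
  rw [Matrix.mul_one, ← Matrix.mul_assoc]
  exact hex.choose_spec.1

theorem isUnit_msqrt (hτ : τ.PosDef) : IsUnit (msqrt τ) := by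
  rw [← isUnit_pow_iff two_ne_zero, pow_two, msqrt_mul_self hτ.posSemidef]
  exact hτ.isUnit

theorem mul_inv_mul_mem_Fdist (hτ : IsUnit τ) (hX : X ∈ Fdist τ W) (hY : Y ∈ Fdist τ W) :
    X * τ⁻¹ * Y ∈ Fdist τ W := by
  rw [← mpinv_eq_nonsing_inv hτ]
  exact Submodule.mem_sInf.mpr fun S hS ↦
    hS.2.2.1 X (Submodule.mem_sInf.mp hX S hS) Y (Submodule.mem_sInf.mp hY S hS)

theorem modularMap_mem_Fdist (hτ : τ.PosDef) (hX : X ∈ Fdist τ W) :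
    modularMap τ X ∈ Fdist τ W := by
  have hinv : τ⁻¹ = (msqrt τ)⁻¹ * (msqrt τ)⁻¹ := by
    rw [← Matrix.mul_inv_rev, msqrt_mul_self hτ.posSemidef]
  have htwice : modularMap τ X =
      msqrt τ * (msqrt τ * X * mpinv (msqrt τ)) * mpinv (msqrt τ) := by
    rw [modularMap_apply, hinv, mpinv_eq_nonsing_inv (isUnit_msqrt hτ)]
    simp only [Matrix.mul_assoc]
    rw [← Matrix.mul_assoc (msqrt τ) (msqrt τ), msqrt_mul_self hτ.posSemidef]
  rw [htwice]
  exact msqrt_mul_mul_mpinv_msqrt_mem_Fdist (msqrt_mul_mul_mpinv_msqrt_mem_Fdist hX)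

theorem inv_mul_mul_mem_Fdist (hτ : τ.PosDef) (hX : X ∈ Fdist τ W) : τ⁻¹ * X * τ ∈ Fdist τ W := by
  have h := conjTranspose_mem_Fdist (modularMap_mem_Fdist hτ (conjTranspose_mem_Fdist hX))
  simpa [modularMap_apply, hτ.isHermitian.eq, hτ.inv.isHermitian.eq, Matrix.mul_assoc] using h

/-- The unital `*`-algebra `F_τ(W) τ⁻¹`: right multiplication by `τ⁻¹` turns the `τ`-modified
product into the usual one, and modular invariance makes the result closed under the adjoint. -/
noncomputable def undistortedAlgebra (hτ : τ.PosDef) (hτW : τ ∈ W) :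
    StarSubalgebra ℂ (Matrix ι ι ℂ) where
  carrier := {a | a * τ ∈ Fdist τ W}
  add_mem' {a b} ha hb := by
    simpa only [Set.mem_ofPred_eq, Matrix.add_mul] using add_mem ha hb
  mul_mem' {a b} ha hb := by
    have h := mul_inv_mul_mem_Fdist hτ.isUnit ha hb
    rwa [mul_nonsing_inv_cancel_right _ _ ((isUnit_iff_isUnit_det τ).mp hτ.isUnit),
      ← Matrix.mul_assoc] at h
  algebraMap_mem' c := by
    simpa [Algebra.algebraMap_eq_smul_one] using (Fdist τ W).smul_mem c (subset_Fdist hτW)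
  star_mem' {a} ha := by
    have h := inv_mul_mul_mem_Fdist hτ (conjTranspose_mem_Fdist ha)
    rwa [conjTranspose_mul, hτ.isHermitian.eq,
      nonsing_inv_mul_cancel_left _ _ ((isUnit_iff_isUnit_det τ).mp hτ.isUnit)] at h

theorem mem_undistortedAlgebra {hτ : τ.PosDef} {hτW : τ ∈ W} :
    X ∈ undistortedAlgebra hτ hτW ↔ X * τ ∈ Fdist τ W :=
  Iff.rfl

theorem mul_inv_mem_undistortedAlgebra (hτ : τ.PosDef) (hτW : τ ∈ W) (hX : X ∈ Fdist τ W) :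
    X * τ⁻¹ ∈ undistortedAlgebra hτ hτW := by
  rwa [mem_undistortedAlgebra,
    nonsing_inv_mul_cancel_right _ _ ((isUnit_iff_isUnit_det τ).mp hτ.isUnit)]

theorem undistortedAlgebra_mul_mem_Fdist {hτ : τ.PosDef} {hτW : τ ∈ W}
    (hA : A ∈ undistortedAlgebra hτ hτW) (hX : X ∈ Fdist τ W) : A * X ∈ Fdist τ W := by
  have h := mul_inv_mul_mem_Fdist hτ.isUnit hA hX
  rwa [mul_nonsing_inv_cancel_right _ _ ((isUnit_iff_isUnit_det τ).mp hτ.isUnit)] at h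

theorem modularMap_mem_centralizer_undistortedAlgebra (hτ : τ.PosDef) (hτW : τ ∈ W)
    (hX : X ∈ (undistortedAlgebra hτ hτW : Set (Matrix ι ι ℂ)).centralizer) :
    modularMap τ X ∈ (undistortedAlgebra hτ hτW : Set (Matrix ι ι ℂ)).centralizer := by
  intro a ha
  have hdet := (isUnit_iff_isUnit_det τ).mp hτ.isUnit
  have hconj : τ⁻¹ * a * τ ∈ undistortedAlgebra hτ hτW := by
    rw [mem_undistortedAlgebra, Matrix.mul_assoc τ⁻¹]
    exact inv_mul_mul_mem_Fdist hτ ha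
  calc a * modularMap τ X = τ * (τ⁻¹ * a * τ * X) * τ⁻¹ := by
        simp only [modularMap_apply, Matrix.mul_assoc, mul_nonsing_inv_cancel_left _ _ hdet]
    _ = τ * (X * (τ⁻¹ * a * τ)) * τ⁻¹ := by rw [hX _ hconj]
    _ = modularMap τ X * a := by
        simp only [modularMap_apply, Matrix.mul_assoc, mul_nonsing_inv τ hdet, Matrix.mul_one]

theorem IsModularEigenop.of_mem_Fdist {L : Matrix ι ι ℂ} {ω : ℝ} (h : IsModularEigenop τ L ω)
    (hτ : τ.PosDef) (hτW : τ ∈ W)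
    (hL : L ∈ (undistortedAlgebra hτ hτW : Set (Matrix ι ι ℂ)).centralizer)
    (hX : X ∈ Fdist τ W) : IsModularEigenop X L ω where
  pos := h.pos
  mul_eq := by
    have hdet := (isUnit_iff_isUnit_det τ).mp hτ.isUnit
    calc X * L = X * τ⁻¹ * (τ * L) := by
          rw [← Matrix.mul_assoc, nonsing_inv_mul_cancel_right _ _ hdet]
      _ = (ω : ℂ) • (X * τ⁻¹ * L * τ) := by
          rw [h.mul_eq, Matrix.mul_smul, ← Matrix.mul_assoc]
      _ = (ω : ℂ) • (L * X) := by
          rw [hL _ (mul_inv_mem_undistortedAlgebra hτ hτW hX), ← Matrix.mul_assoc,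
            nonsing_inv_mul_cancel_right _ _ hdet]

theorem exists_isModularEigenop_commute_imp_mem_undistortedAlgebra (hτ : τ.PosDef)
    (hτW : τ ∈ W) : ∃ (m : ℕ) (L : Fin m → Matrix ι ι ℂ) (ω : Fin m → ℝ),
      (∀ k, IsModularEigenop τ (L k) (ω k)) ∧
      (∀ k, L k ∈ (undistortedAlgebra hτ hτW : Set (Matrix ι ι ℂ)).centralizer) ∧
      ∀ Z, (∀ k, Commute (L k) Z) → Z ∈ undistortedAlgebra hτ hτW := by
  let C := Subalgebra.toSubmodule
    (Subalgebra.centralizer ℂ (undistortedAlgebra hτ hτW : Set (Matrix ι ι ℂ)))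
  obtain ⟨s, hs, hspan⟩ := Submodule.fg_span_iff_fg_span_finset_subset _ |>.mp <|
    IsNoetherian.noetherian (Submodule.span ℂ {L | L ∈ C ∧ ∃ ω, IsModularEigenop τ L ω})
  choose hC ω hω using fun k ↦ hs (s.equivFin.symm k).2
  refine ⟨s.card, fun k ↦ s.equivFin.symm k, ω, hω, hC, fun Z hZ ↦ ?_⟩
  have hsZ : Submodule.span ℂ (s : Set (Matrix ι ι ℂ)) ≤
      Subalgebra.toSubmodule (Subalgebra.centralizer ℂ {Z}) := by
    refine Submodule.span_le.mpr fun L hL ↦ ?_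
    simpa [Set.mem_centralizer_iff] using (hZ (s.equivFin ⟨L, hL⟩)).eq.symm
  rw [← SetLike.mem_coe, ← centralizer_centralizer_starSubalgebra_matrix]
  intro c hc
  have hcs := hspan ▸ le_span_isModularEigenop hτ
    (fun X ↦ modularMap_mem_centralizer_undistortedAlgebra hτ hτW) hc
  exact (hsZ hcs Z rfl).symm

end DistortedAlgebra

section NeighborhoodBlocks

variable {n : ℕ} {d : Fin n → Type*} {N : Finset (Fin n)}

/-- The `(k, l)` block, an operator on `H_N`, of an operator on `H = H_N ⊗ H_N̄`. -/
def nbhdBlock (N : Finset (Fin n)) (X : Matrix (∀ a, d a) (∀ a, d a) ℂ) (k l : nbhdCoIdx d N) :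
    Matrix (nbhdIdx d N) (nbhdIdx d N) ℂ :=
  X.submatrix (fun i ↦ (splitEquiv d N).symm (i, k)) fun j ↦ (splitEquiv d N).symm (j, l)

theorem ext_nbhdBlock {X Y : Matrix (∀ a, d a) (∀ a, d a) ℂ}
    (h : ∀ k l, nbhdBlock N X k l = nbhdBlock N Y k l) : X = Y := by
  ext u v
  simpa [nbhdBlock] using congrFun₂ (h (splitEquiv d N u).2 (splitEquiv d N v).2)
    (splitEquiv d N u).1 (splitEquiv d N v).1

theorem nbhdBlock_splitLift (A : Matrix (nbhdIdx d N) (nbhdIdx d N) ℂ)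
    (B : Matrix (nbhdCoIdx d N) (nbhdCoIdx d N) ℂ) (k l : nbhdCoIdx d N) :
    nbhdBlock N (splitLift d N A B) k l = B k l • A := by
  ext i j
  simp [nbhdBlock, splitLift, mul_comm]

section Fintype

variable [∀ a, Fintype (d a)]

theorem nbhdPtrace_eq_sum_nbhdBlock (X : Matrix (∀ a, d a) (∀ a, d a) ℂ) :
    nbhdPtrace d N X = ∑ k, nbhdBlock N X k k := by
  ext i j
  simp [nbhdPtrace, nbhdBlock, Matrix.sum_apply]

theorem nbhdBlock_mul (X Y : Matrix (∀ a, d a) (∀ a, d a) ℂ) (k l : nbhdCoIdx d N) :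
    nbhdBlock N (X * Y) k l = ∑ m, nbhdBlock N X k m * nbhdBlock N Y m l := by
  ext i j
  simp only [nbhdBlock, submatrix_apply, mul_apply, Matrix.sum_apply]
  rw [← (splitEquiv d N).symm.sum_comp, Fintype.sum_prod_type, Finset.sum_comm]

theorem posDef_nbhdPtrace [Nonempty (∀ a, d a)] {X : Matrix (∀ a, d a) (∀ a, d a) ℂ}
    (hX : X.PosDef) : (nbhdPtrace d N X).PosDef := by
  rw [nbhdPtrace_eq_sum_nbhdBlock]
  have : Nonempty (nbhdCoIdx d N) := (splitEquiv d N).symm.nonempty.map Prod.snd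
  refine posDef_sum Finset.univ_nonempty fun k _ ↦ hX.submatrix fun i j hij ↦ ?_
  simpa using hij

end Fintype

variable [∀ a, DecidableEq (d a)]

theorem conjTranspose_nbhdLift (A : Matrix (nbhdIdx d N) (nbhdIdx d N) ℂ) :
    (nbhdLift d N A)ᴴ = nbhdLift d N Aᴴ := by
  rw [nbhdLift, splitLift, conjTranspose_submatrix, conjTranspose_kronecker, conjTranspose_one]
  rfl

theorem nbhdLift_smul (c : ℂ) (A : Matrix (nbhdIdx d N) (nbhdIdx d N) ℂ) :
    nbhdLift d N (c • A) = c • nbhdLift d N A := by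
  ext u v
  simp [nbhdLift, splitLift, mul_assoc]

theorem nbhdLift_zero : nbhdLift d N 0 = 0 := by
  ext u v
  simp [nbhdLift, splitLift]

theorem coLift_one : coLift d N 1 = 1 := by
  rw [coLift, splitLift, kroneckerMap_one_one _ zero_mul mul_zero (one_mul 1),
    submatrix_one_equiv]

variable [∀ a, Fintype (d a)]

theorem nbhdBlock_nbhdLift_mul (A : Matrix (nbhdIdx d N) (nbhdIdx d N) ℂ)
    (X : Matrix (∀ a, d a) (∀ a, d a) ℂ) (k l : nbhdCoIdx d N) :
    nbhdBlock N (nbhdLift d N A * X) k l = A * nbhdBlock N X k l := by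
  simp [nbhdBlock_mul, nbhdLift, nbhdBlock_splitLift, one_apply, ite_smul, ite_mul]

theorem nbhdBlock_mul_nbhdLift (X : Matrix (∀ a, d a) (∀ a, d a) ℂ)
    (A : Matrix (nbhdIdx d N) (nbhdIdx d N) ℂ) (k l : nbhdCoIdx d N) :
    nbhdBlock N (X * nbhdLift d N A) k l = nbhdBlock N X k l * A := by
  simp [nbhdBlock_mul, nbhdLift, nbhdBlock_splitLift, one_apply, ite_smul, mul_ite]

theorem commute_nbhdLift_iff {A : Matrix (nbhdIdx d N) (nbhdIdx d N) ℂ}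
    {X : Matrix (∀ a, d a) (∀ a, d a) ℂ} :
    Commute (nbhdLift d N A) X ↔ ∀ k l, Commute A (nbhdBlock N X k l) := by
  simp only [commute_iff_eq, ← nbhdBlock_nbhdLift_mul, ← nbhdBlock_mul_nbhdLift]
  exact ⟨fun h _ _ ↦ by rw [h], ext_nbhdBlock⟩

theorem isModularEigenop_nbhdLift {X : Matrix (∀ a, d a) (∀ a, d a) ℂ} [Nonempty (nbhdCoIdx d N)]
    {A : Matrix (nbhdIdx d N) (nbhdIdx d N) ℂ} {ω : ℝ}
    (h : ∀ k l, IsModularEigenop (nbhdBlock N X k l) A ω) :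
    IsModularEigenop X (nbhdLift d N A) ω where
  pos := (h (Classical.arbitrary _) (Classical.arbitrary _)).pos
  mul_eq := ext_nbhdBlock (N := N) fun k l ↦ by
    rw [nbhdBlock_mul_nbhdLift, (h k l).mul_eq, ← nbhdBlock_nbhdLift_mul]
    rfl

theorem nbhdBlock_mem_nbhdSchmidt (X : Matrix (∀ a, d a) (∀ a, d a) ℂ) (k l : nbhdCoIdx d N) :
    nbhdBlock N X k l ∈ nbhdSchmidt d N X := by
  refine ⟨single l k 1, ?_⟩
  simp only [nbhdPtrace_eq_sum_nbhdBlock, nbhdBlock_mul, coLift, nbhdBlock_splitLift,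
    single_apply, ite_smul, one_smul, zero_smul, ite_mul, one_mul, zero_mul, ite_and]
  simp

theorem nbhdPtrace_mem_nbhdSchmidt (X : Matrix (∀ a, d a) (∀ a, d a) ℂ) :
    nbhdPtrace d N X ∈ nbhdSchmidt d N X :=
  ⟨1, by rw [coLift_one, one_mul]⟩

theorem sum_splitLift_nbhdBlock_single (X : Matrix (∀ a, d a) (∀ a, d a) ℂ) :
    ∑ k, ∑ l, splitLift d N (nbhdBlock N X k l) (single k l 1) = X := by
  ext u v
  simp [Matrix.sum_apply, splitLift, nbhdBlock, single_apply, ite_and]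

theorem mem_extF_of_nbhdBlock_mem {ρ X : Matrix (∀ a, d a) (∀ a, d a) ℂ}
    (h : ∀ k l, nbhdBlock N X k l ∈ Fdist (nbhdPtrace d N ρ) (nbhdSchmidt d N ρ)) :
    X ∈ extF d N ρ := by
  rw [← sum_splitLift_nbhdBlock_single (N := N) X]
  exact sum_mem fun k _ ↦ sum_mem fun l _ ↦ Submodule.subset_span ⟨_, h k l, _, rfl⟩

end NeighborhoodBlocks

section NeighborhoodGenerators

variable {n : ℕ} {d : Fin n → Type*} [∀ a, Fintype (d a)] [∀ a, DecidableEq (d a)]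
  {N : Finset (Fin n)} {L L' : Matrix (∀ a, d a) (∀ a, d a) ℂ →ₗ[ℂ] Matrix (∀ a, d a) (∀ a, d a) ℂ}

theorem isDissipNbhdGen_iff : IsDissipNbhdGen d N L ↔
    ∃ (m : ℕ) (A : Fin m → Matrix (nbhdIdx d N) (nbhdIdx d N) ℂ),
      L = ∑ k, dissipator (nbhdLift d N (A k)) := by
  simp only [IsDissipNbhdGen, lindbladMap_zero]

theorem isDissipNbhdGen_zero : IsDissipNbhdGen d N 0 :=
  isDissipNbhdGen_iff.mpr ⟨0, Fin.elim0, by simp⟩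

theorem isDissipNbhdGen_dissipator (A : Matrix (nbhdIdx d N) (nbhdIdx d N) ℂ) :
    IsDissipNbhdGen d N (dissipator (nbhdLift d N A)) :=
  isDissipNbhdGen_iff.mpr ⟨1, fun _ ↦ A, by simp⟩

namespace IsDissipNbhdGen

theorem isNbhdGen (h : IsDissipNbhdGen d N L) : IsNbhdGen d N L := by
  obtain ⟨m, A, rfl⟩ := h
  exact ⟨0, isHermitian_zero, m, A, by rw [nbhdLift_zero]⟩

theorem trace_apply (h : IsDissipNbhdGen d N L) (X : Matrix (∀ a, d a) (∀ a, d a) ℂ) :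
    (L X).trace = 0 := by
  obtain ⟨m, A, rfl⟩ := h
  exact trace_lindbladMap_zero_apply _ X

theorem add (h : IsDissipNbhdGen d N L) (h' : IsDissipNbhdGen d N L') :
    IsDissipNbhdGen d N (L + L') := by
  obtain ⟨m, A, rfl⟩ := isDissipNbhdGen_iff.mp h
  obtain ⟨m', A', rfl⟩ := isDissipNbhdGen_iff.mp h'
  exact isDissipNbhdGen_iff.mpr ⟨m + m', Fin.append A A', by simp [Fin.sum_univ_add]⟩

theorem smul (h : IsDissipNbhdGen d N L) {c : ℝ} (hc : 0 ≤ c) :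
    IsDissipNbhdGen d N ((c : ℂ) • L) := by
  obtain ⟨m, A, rfl⟩ := isDissipNbhdGen_iff.mp h
  have hsqrt : star (√c : ℂ) * √c = c := by
    rw [RCLike.star_def, Complex.conj_ofReal, ← Complex.ofReal_mul, Real.mul_self_sqrt hc]
  refine isDissipNbhdGen_iff.mpr ⟨m, fun k ↦ (√c : ℂ) • A k, ?_⟩
  simp only [nbhdLift_smul, dissipator_smul, hsqrt, Finset.smul_sum]

theorem sum {κ : Type*} {s : Finset κ}
    {D : κ → Matrix (∀ a, d a) (∀ a, d a) ℂ →ₗ[ℂ] Matrix (∀ a, d a) (∀ a, d a) ℂ}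
    (h : ∀ k ∈ s, IsDissipNbhdGen d N (D k)) : IsDissipNbhdGen d N (∑ k ∈ s, D k) :=
  Finset.sum_induction D _ (fun _ _ ↦ add) isDissipNbhdGen_zero h

end IsDissipNbhdGen

theorem isDissipNbhdGen_balancedDissipator (A : Matrix (nbhdIdx d N) (nbhdIdx d N) ℂ) {ω : ℝ}
    (hω : 0 < ω) : IsDissipNbhdGen d N (balancedDissipator (nbhdLift d N A) ω) := by
  rw [balancedDissipator, conjTranspose_nbhdLift, ← Complex.ofReal_inv]
  exact (isDissipNbhdGen_dissipator A).add
    ((isDissipNbhdGen_dissipator Aᴴ).smul (inv_pos.mpr hω).le)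

theorem exists_isDissipNbhdGen_dirichletForm_eq_zero [Nonempty (∀ a, d a)]
    (N : Finset (Fin n)) {ρ : Matrix (∀ a, d a) (∀ a, d a) ℂ} (hρ : ρ.PosDef) :
    ∃ L, IsDissipNbhdGen d N L ∧ (∀ X, 0 ≤ dirichletForm ρ L X) ∧
      ∀ X, dirichletForm ρ L X = 0 → L X = 0 ∧ X ∈ extF d N ρ := by
  let τ := nbhdPtrace d N ρ
  have hτ : τ.PosDef := posDef_nbhdPtrace hρ
  have hτW : τ ∈ nbhdSchmidt d N ρ := nbhdPtrace_mem_nbhdSchmidt ρ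
  have hblock (k l) : nbhdBlock N ρ k l ∈ Fdist τ (nbhdSchmidt d N ρ) :=
    subset_Fdist (nbhdBlock_mem_nbhdSchmidt ρ k l)
  obtain ⟨m, A, ω, hA, hAcomm, hmem⟩ :=
    exists_isModularEigenop_commute_imp_mem_undistortedAlgebra hτ hτW
  have : Nonempty (nbhdCoIdx d N) := (splitEquiv d N).symm.nonempty.map Prod.snd
  have hJ : ∀ k, IsModularEigenop ρ (nbhdLift d N (A k)) (ω k) := fun k ↦
    isModularEigenop_nbhdLift fun p q ↦ (hA k).of_mem_Fdist hτ hτW (hAcomm k) (hblock p q)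
  have factor (X : Matrix (∀ a, d a) (∀ a, d a) ℂ) : X * ρ⁻¹ * ρ = X :=
    nonsing_inv_mul_cancel_right _ _ ((isUnit_iff_isUnit_det ρ).mp hρ.isUnit)
  refine ⟨∑ k, balancedDissipator (nbhdLift d N (A k)) (ω k),
    .sum fun k _ ↦ isDissipNbhdGen_balancedDissipator _ (hA k).pos, fun X ↦ ?_, fun X hX ↦ ?_⟩
  · rw [← factor X]
    exact dirichletForm_sum_nonneg fun k _ ↦ dirichletForm_balancedDissipator_mul_nonneg hρ (hJ k) _
  · rw [← factor X] at hX ⊢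
    have hcomm (k) := (dirichletForm_balancedDissipator_mul_eq_zero_iff hρ (hJ k)).mp <|
      (dirichletForm_sum_eq_zero_iff fun k _ ↦
        dirichletForm_balancedDissipator_mul_nonneg hρ (hJ k) _).mp hX k (Finset.mem_univ k)
    refine ⟨?_, mem_extF_of_nbhdBlock_mem fun p q ↦ ?_⟩
    · rw [LinearMap.sum_apply]
      exact Finset.sum_eq_zero fun k _ ↦ balancedDissipator_mul_eq_zero hρ.isHermitian (hJ k)
        (hcomm k).1 (hcomm k).2
    · rw [nbhdBlock_mul]
      exact sum_mem fun r _ ↦ undistortedAlgebra_mul_mem_Fdist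
        (hmem _ fun k ↦ commute_nbhdLift_iff.mp (hcomm k).1 p r) (hblock r q)

end NeighborhoodGenerators

/-! ### Statement 11 -/

theorem stmt11
    {n : ℕ} {d : Fin n → Type*} [∀ a, Fintype (d a)] [∀ a, DecidableEq (d a)]
    {M : ℕ} (Nb : Fin M → Finset (Fin n))
    (ρ : Matrix (∀ a, d a) (∀ a, d a) ℂ) (hρ : ρ.PosDef) (hρtr : ρ.trace = 1)
    (h : Submodule.span ℂ {ρ} = ⨅ j, extF d (Nb j) ρ) :
    ∃ Lj : Fin M →
        (Matrix (∀ a, d a) (∀ a, d a) ℂ →ₗ[ℂ] Matrix (∀ a, d a) (∀ a, d a) ℂ),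
      (∀ j, IsNbhdGen d (Nb j) (Lj j)) ∧ (∀ j, IsDissipNbhdGen d (Nb j) (Lj j)) ∧
        IsFFFamily d Lj ∧ IsGAS (∑ j, Lj j) ρ := by
  have : Nonempty (∀ a, d a) := not_isEmpty_iff.mp fun _ ↦ by simp [trace] at hρtr
  choose Lj hdissip hnonneg hzero using
    fun j ↦ exists_isDissipNbhdGen_dirichletForm_eq_zero (Nb j) hρ
  have hsum_zero {X} (hX : dirichletForm ρ (∑ j, Lj j) X = 0) (j) : dirichletForm ρ (Lj j) X = 0 :=
    (dirichletForm_sum_eq_zero_iff fun j _ ↦ hnonneg j X).mp hX j (Finset.mem_univ j)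
  have htrace (X) : ((∑ j, Lj j) X).trace = 0 := by
    simp [LinearMap.sum_apply, trace_sum, (hdissip _).trace_apply]
  have hker (j) : Lj j ρ = 0 :=
    (hzero j ρ (by rw [dirichletForm_self hρ, (hdissip j).trace_apply, neg_zero])).1
  refine ⟨Lj, fun j ↦ (hdissip j).isNbhdGen, hdissip, fun σ _ hσ j ↦ ?_,
    isGAS_of_dirichletForm_pos hρ hρtr (by simp [LinearMap.sum_apply, hker]) htrace
      fun X hX hX0 ↦ (dirichletForm_sum_nonneg fun j _ ↦ hnonneg j X).lt_of_ne' fun hXzero ↦ hX0 ?_⟩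
  · exact (hzero j σ (hsum_zero (by simp [dirichletForm, hσ]) j)).1
  · have hXρ : X ∈ Submodule.span ℂ {ρ} :=
      h ▸ (Submodule.mem_iInf _).mpr fun j ↦ (hzero j X (hsum_zero hXzero j)).2
    obtain ⟨c, rfl⟩ := Submodule.mem_span_singleton.mp hXρ
    rw [trace_smul, hρtr, smul_eq_mul, mul_one] at hX
    rw [hX, zero_smul]
end QDS
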